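/- Assume 0 < m_i < n for all i. For every s ∈ [0,∞)^h, every real λ > 1 and every i ∈ {1,…,h}: G_i(λs) < λ·G_i(s), where λs = (λs_1,…,λs_h). -/

import Mathlib

/-!
Suppose that `z = G_i(λs)` were at least `λ y`, where `y = G_i(s)`. Passing from `s` with `i`-th
coordinate `y` to `λs` with `i`-th coordinate `z`, the `i`-th coordinate grows by the factor
`z / y > 1` and every other one by the factor `λ ≤ z / y`. Since the `i`-th coordinate grows the
most, and the constant `1` in the denominators does not grow at all, `D_i` strictly increases; but
both of its values are `m_i`.
-/

open Finset Filter

/-- `D_i(s) = Σ_{k=1}^n p_k^{ht(i)} s_i / (1 + Σ_{j=1}^h p_k^{ht(j)} s_j)`.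
Lists `1,…,h` are indexed by `i : Fin h` (index `i` stands for list `i+1`). -/
noncomputable def Dfun (n h : ℕ) (p : Fin n → ℝ) (ht : Fin h → ℕ) (s : Fin h → ℝ)
    (i : Fin h) : ℝ :=
  ∑ k, p k ^ ht i * s i / (1 + ∑ j, p k ^ ht j * s j)

/-- Flat height function on lists `1,…,h` (index `i : Fin h` stands for list `i+1`):
`ht_F(i) = i` for `i ≤ h_N` and `ht_F(i) = i − h_N` for `i > h_N`. -/
def htFlat (h hN : ℕ) : Fin h → ℕ :=
  fun i => if i.val + 1 ≤ hN then i.val + 1 else i.val + 1 - hN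

/-- Layered height function on lists `1,…,h`: `ht_L(i) = i`. -/
def htLayer (h : ℕ) : Fin h → ℕ := fun i => i.val + 1

section Occupancy

variable {ι κ 𝕜 : Type*}

/-- The function `D_i` for an arbitrary matrix of weights `w k j` in place of `p_k ^ ht(j)`:
the expected number of items `k` in the list `i`, where `k` is in the list `j` with probability
proportional to `w k j * s j`, and in no list with probability proportional to `1`. -/
def occupancy [Fintype ι] [Fintype κ] [Field 𝕜] (w : ι → κ → 𝕜) (s : κ → 𝕜) (i : κ) : 𝕜 :=
  ∑ k, w k i * s i / (1 + w k ⬝ᵥ s)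

variable [Field 𝕜] [LinearOrder 𝕜] [IsStrictOrderedRing 𝕜]

lemma smul_update_smul_le_smul_update [DecidableEq κ] {s : κ → 𝕜} {c y z : 𝕜}
    (hs : 0 ≤ s) (hz : c * y ≤ z) (i : κ) :
    y • Function.update (c • s) i z ≤ z • Function.update s i y := by
  intro j
  obtain rfl | hj := eq_or_ne j i
  · simp [mul_comm]
  · have hsj : c * y * s j ≤ z * s j := mul_le_mul_of_nonneg_right hz (hs j)
    simpa [hj, mul_left_comm, mul_assoc] using hsj

variable [Fintype κ]

lemma div_one_add_dotProduct_lt_div_one_add_dotProduct {a s t : κ → 𝕜} {x y : 𝕜}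
    (ha : 0 ≤ a) (hs : 0 ≤ s) (ht : 0 ≤ t) (hxy : x < y) (hst : x • t ≤ y • s) :
    x / (1 + a ⬝ᵥ s) < y / (1 + a ⬝ᵥ t) := by
  have has : 0 ≤ a ⬝ᵥ s := dotProduct_nonneg_of_nonneg ha hs
  have hat : 0 ≤ a ⬝ᵥ t := dotProduct_nonneg_of_nonneg ha ht
  have hdot : x * (a ⬝ᵥ t) ≤ y * (a ⬝ᵥ s) := by
    simpa only [dotProduct_smul, smul_eq_mul] using dotProduct_le_dotProduct_of_nonneg_left hst ha
  rw [div_lt_div_iff₀ (by positivity) (by positivity)]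
  linarith

lemma occupancy_lt_occupancy [Fintype ι] {w : ι → κ → 𝕜} {s t : κ → 𝕜} {i : κ}
    (hw : 0 ≤ w) (hwi : ∃ k, 0 < w k i) (hs : 0 ≤ s) (ht : 0 ≤ t)
    (hi : s i < t i) (hst : s i • t ≤ t i • s) :
    occupancy w s i < occupancy w t i := by
  have hlt (k : ι) : s i / (1 + w k ⬝ᵥ s) < t i / (1 + w k ⬝ᵥ t) :=
    div_one_add_dotProduct_lt_div_one_add_dotProduct (hw k) hs ht hi hst
  obtain ⟨k, hk⟩ := hwi
  simp only [occupancy, mul_div_assoc]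
  exact sum_lt_sum (fun l _ => mul_le_mul_of_nonneg_left (hlt l).le (hw l i))
    ⟨k, mem_univ k, mul_lt_mul_of_pos_left (hlt k) hk⟩

theorem G_strictly_subhomogeneous_general [Fintype ι] [DecidableEq κ]
    {w : ι → κ → 𝕜} {i : κ} (hw : 0 ≤ w) (hwi : ∃ k, 0 < w k i)
    {m : κ → 𝕜} {G : (κ → 𝕜) → κ → 𝕜}
    (hG : ∀ s, 0 ≤ s → ∀ i, 0 < G s i ∧ occupancy w (Function.update s i (G s i)) i = m i)
    {s : κ → 𝕜} (hs : 0 ≤ s) {c : 𝕜} (hc : 1 < c) :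
    G (c • s) i < c * G s i := by
  have hcs : 0 ≤ c • s := smul_nonneg (zero_le_one.trans hc.le) hs
  obtain ⟨hy, hoccy⟩ := hG s hs i
  obtain ⟨hz, hoccz⟩ := hG (c • s) hcs i
  by_contra! hle
  have hyz : G s i < G (c • s) i := (lt_mul_of_one_lt_left hy hc).trans_le hle
  have hupdate {u : κ → 𝕜} {x : 𝕜} (hu : 0 ≤ u) (hx : 0 < x) : 0 ≤ Function.update u i x :=
    le_update_iff.2 ⟨hx.le, fun j _ => hu j⟩
  have hlt : occupancy w (Function.update s i (G s i)) i <
      occupancy w (Function.update (c • s) i (G (c • s) i)) i :=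
    occupancy_lt_occupancy hw hwi (hupdate hs hy) (hupdate hcs hz) (by simpa using hyz)
      (by simpa using smul_update_smul_le_smul_update hs hle i)
  exact hlt.ne (hoccy.trans hoccz.symm)

end Occupancy

/-- the implicit map `G` is strictly subhomogeneous: for every `s ∈ [0,∞)^h`,
every `λ > 1` and every `i`, `G_i(λs) < λ·G_i(s)`. -/
theorem G_strictly_subhomogeneous
    (n h hN : ℕ) (hn : 2 ≤ n) (hh : 2 ≤ h) (hN1 : 1 ≤ hN) (hNh : hN < h)
    (ht : Fin h → ℕ) (hht : ht = htFlat h hN ∨ ht = htLayer h)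
    (p : Fin n → ℝ) (hp : ∀ k, 0 < p k)
    (m : Fin h → ℝ) (hm : ∀ i, 0 < m i ∧ m i < n)
    (G : (Fin h → ℝ) → Fin h → ℝ)
    (hG : ∀ s : Fin h → ℝ, (∀ j, 0 ≤ s j) → ∀ i,
      0 < G s i ∧ Dfun n h p ht (Function.update s i (G s i)) i = m i)
    (s : Fin h → ℝ) (hs : ∀ j, 0 ≤ s j) (lam : ℝ) (hlam : 1 < lam) :
    ∀ i, G (fun j => lam * s j) i < lam * G s i :=
  fun i => G_strictly_subhomogeneous_general (w := fun k j => p k ^ ht j)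
    (fun k j => (pow_pos (hp k) (ht j)).le) ⟨⟨0, by omega⟩, pow_pos (hp _) (ht i)⟩ hG hs hlam
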